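/- Let p : I × I → [0,∞) be a kernel that is substochastic (Σ_t p(s,t) ≤ 1 for every s ∈ I) and satisfies hypotheses (H1), (H2), (H3) and (H4). Fix z ∈ I, q ∈ (0,1), C > 0, and let b be a q-perturbation of p on Δ_z. Then for every end ω of I with ω|_{|z|} = z and every ε > 0 there exists k ≥ |z| such that for every s ∈ Δ_{ω|k} there is ℓ ≥ |z| with |G_b(s,t) − G_p(s,t)| ≤ ε·G_p(s,t) for all t ∈ Δ_{ω|ℓ}; equivalently, the ratio of the Martin kernels of b and p tends to 1 at the end ω. (The concluding Remark of the paper.) -/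

import Mathlib

open scoped ENNReal

namespace Paper

/-- Words in the two letters `α, β`: the free monoid on two generators, as `List Bool`.
The head of the list is the leftmost letter. -/
abbrev Word := List Bool

/-- Length of the longest common prefix of two lists. -/
def lcpLen : List Bool → List Bool → ℕ
  | a :: s, b :: t => if a = b then lcpLen s t + 1 else 0
  | _, _ => 0

/-- Length of the longest common suffix of two words. -/
def lcsLen (s t : Word) : ℕ := lcpLen s.reverse t.reverse

/-- The tree metric on `Word`: `d(s,t) = (|s| - k) + (|t| - k)`, `k` the length of the
longest common suffix. -/
def treeDist (s t : Word) : ℕ := (s.length - lcsLen s t) + (t.length - lcsLen s t)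

/-- The branch `Δ_x = {u x : u ∈ I}` of words having `x` as a suffix. -/
def Delta (x : Word) : Set Word := {s | x <:+ s}

/-- The geodesic segment `[s,t] = {v : d(s,v) + d(v,t) = d(s,t)}`. -/
def geodesic (s t : Word) : Set Word := {v | treeDist s v + treeDist v t = treeDist s t}

/-- Paths of `n` steps from `s` to `t` staying in `Ω`. -/
def pathSet {X : Type*} (Ω : Set X) (n : ℕ) (s t : X) : Set (Fin (n + 1) → X) :=
  {σ | σ 0 = s ∧ σ (Fin.last n) = t ∧ ∀ i, σ i ∈ Ω}

/-- The weight `∏ a(s_i, s_{i+1})` of a path, as an extended nonnegative real. -/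
noncomputable def weightE {X : Type*} (a : X → X → ℝ) (n : ℕ) (σ : Fin (n + 1) → X) : ℝ≥0∞ :=
  ∏ i : Fin n, ENNReal.ofReal (a (σ i.castSucc) (σ i.succ))

/-- The `n`-step kernel `a⁽ⁿ⁾(s,t)` of the kernel `a` on `Ω`, with values in `[0,∞]`. -/
noncomputable def nStepE {X : Type*} (Ω : Set X) (a : X → X → ℝ) (n : ℕ) (s t : X) : ℝ≥0∞ :=
  ∑' σ : pathSet Ω n s t, weightE a n σ.1

/-- The Green kernel `G_a(s,t) = Σ_n a⁽ⁿ⁾(s,t)` of `a` on `Ω`, with values in `[0,∞]`. -/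
noncomputable def greenE {X : Type*} (Ω : Set X) (a : X → X → ℝ) (s t : X) : ℝ≥0∞ :=
  ∑' n : ℕ, nStepE Ω a n s t

/-- The weight of a path, real version (for signed kernels). -/
noncomputable def weightR {X : Type*} (a : X → X → ℝ) (n : ℕ) (σ : Fin (n + 1) → X) : ℝ :=
  ∏ i : Fin n, a (σ i.castSucc) (σ i.succ)

/-- The `n`-step kernel of a signed kernel `a` on `Ω`. -/
noncomputable def nStepR {X : Type*} (Ω : Set X) (a : X → X → ℝ) (n : ℕ) (s t : X) : ℝ :=
  ∑' σ : pathSet Ω n s t, weightR a n σ.1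

/-- The Green kernel of a signed kernel `a` on `Ω`, as a real number. -/
noncomputable def greenR {X : Type*} (Ω : Set X) (a : X → X → ℝ) (s t : X) : ℝ :=
  ∑' n : ℕ, nStepR Ω a n s t

/-- The Green kernel of `|a|`: finiteness of this expresses absolute convergence of the
series defining the Green kernel of `a`. -/
noncomputable def greenAbs {X : Type*} (Ω : Set X) (a : X → X → ℝ) (s t : X) : ℝ≥0∞ :=
  greenE Ω (fun u v => |a u v|) s t

/-- (H1): finite range `S`. -/
def H1 (p : Word → Word → ℝ) (S : ℕ) : Prop := ∀ s t, S < treeDist s t → p s t = 0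

/-- (H2): nonzero transition probabilities are bounded below by `δ₀`. -/
def H2 (p : Word → Word → ℝ) (δ₀ : ℝ) : Prop := ∀ s t, 0 < p s t → δ₀ ≤ p s t

/-- (H3): uniform irreducibility. -/
def H3 (p : Word → Word → ℝ) (δ₀ : ℝ) (K : ℕ) : Prop :=
  ∀ s t, treeDist s t = 1 → ∃ k ≤ K, ∃ u : ℕ → Word, u 0 = s ∧ u k = t ∧
    ∀ i < k, ∀ x : Word, δ₀ ≤ p (u i ++ x) (u (i + 1) ++ x)

/-- The operator `(Pf)(s) = Σ_t p(s,t) f(t)` extends to a bounded operator of norm at most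
`lam` on `ℓ²(X, m)`, expressed via the associated bilinear form on finitely supported
functions. -/
def opNormBound {X : Type*} (m : X → ℝ) (p : X → X → ℝ) (lam : ℝ) : Prop :=
  ∀ f g : X → ℝ, (Function.support f).Finite → (Function.support g).Finite →
    |∑' s, m s * g s * ∑' t, p s t * f t| ≤
      lam * Real.sqrt (∑' x, m x * f x ^ 2) * Real.sqrt (∑' x, m x * g x ^ 2)

/-- (H4): there is a weight `m` for which `P` is bounded of norm at most `lam` on `ℓ²(I,m)`. -/
def H4 (p : Word → Word → ℝ) (m : Word → ℝ) (lam : ℝ) : Prop :=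
  (∀ x, 0 < m x) ∧ opNormBound m p lam

/-- Substochasticity: `Σ_t p(s,t) ≤ 1` for every `s`. -/
def Substochastic (p : Word → Word → ℝ) : Prop :=
  ∀ s, (∑' t, ENNReal.ofReal (p s t)) ≤ 1

/-- `b` is a `q`-perturbation of `p` on `Δ_z` (with constant `C`). -/
def Perturb (p b : Word → Word → ℝ) (z : Word) (q C : ℝ) : Prop :=
  ∀ s t, s ∈ Delta z → t ∈ Delta z →
    |b s t| ≤ p s t ∧ |b s t - p s t| ≤ C * q ^ s.length

/-- The word `ω|k = ω(k-1) ω(k-2) ⋯ ω(0)` of length `k` determined by an end `ω`. -/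
def endWord (ω : ℕ → Bool) (k : ℕ) : Word := (List.range k).reverse.map ω

/-- The last-entrance kernel `M_p(s,u)`: sum over paths from `s` to `u` of length at least
one whose second-to-last point lies outside `Δ_x`. -/
noncomputable def lastEnter (p : Word → Word → ℝ) (x s u : Word) : ℝ≥0∞ :=
  ∑' m : ℕ, ∑' σ : {σ : Fin (m + 2) → Word //
      σ ∈ pathSet Set.univ (m + 1) s u ∧ σ ((Fin.last m).castSucc) ∉ Delta x},
    weightE p (m + 1) σ.1

/-- The quantum integer `[n]_q = (q⁻ⁿ - qⁿ)/(q⁻¹ - q)`. -/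
noncomputable def qInt (q : ℝ) (n : ℕ) : ℝ := (q ^ (-(n : ℤ)) - q ^ (n : ℤ)) / (q⁻¹ - q)

/-- The lengths of the blocks in the canonical factorization of a word into maximal
alternating subwords. -/
def blockLens : Word → List ℕ
  | [] => []
  | [_] => [1]
  | a :: b :: rest =>
    match blockLens (b :: rest) with
    | [] => [1]
    | k :: ks => if a = b then 1 :: (k :: ks) else (k + 1) :: ks

/-- The quantum dimension `dim_q(x) = Π_i [|x_i| + 1]_q` over the blocks of `x`. -/
noncomputable def dimq (q : ℝ) (x : Word) : ℝ := ((blockLens x).map fun L => qInt q (L + 1)).prod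

/-- The classical dimension `dim(x) = Π_i (|x_i| + 1)` over the blocks of `x`. -/
noncomputable def dimn (x : Word) : ℝ := ((blockLens x).map fun L => (L + 1 : ℝ)).prod

/-- The involution `x ↦ x̄`: reverse the word and exchange the two letters. -/
def bar (x : Word) : Word := (x.map fun a => !a).reverse

/-- The fusion multiplicity `mᵗ_{r,s}`: the number of words `z` such that `r = r₀ z`,
`s = z̄ s₀`, `t = r₀ s₀` for some `r₀, s₀`. -/
noncomputable def fuse (r s t : Word) : ℕ :=
  {z : Word | ∃ r₀ s₀ : Word, r = r₀ ++ z ∧ s = bar z ++ s₀ ∧ t = r₀ ++ s₀}.ncard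

/-- A finitely supported probability measure on `Word`. -/
def IsProbMeasure (μ : Word → ℝ) : Prop :=
  (∀ x, 0 ≤ μ x) ∧ (Function.support μ).Finite ∧ ∑' x, μ x = 1

/-- The transition kernel `p_μ(s,t) = Σ_r μ(r) mᵗ_{r,s} dim_q(t)/(dim_q(r) dim_q(s))`. -/
noncomputable def pMu (q : ℝ) (μ : Word → ℝ) (s t : Word) : ℝ :=
  ∑' r, μ r * (fuse r s t : ℝ) * dimq q t / (dimq q r * dimq q s)

/-- The `q`-binomial coefficient. -/
noncomputable def qbinom (q : ℝ) (n k : ℕ) : ℝ :=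
  q ^ (-((k * (n - k) : ℕ) : ℤ)) *
    ∏ i ∈ Finset.range k, (1 - q ^ (2 * (n - i))) / (1 - q ^ (2 * (k - i)))

open scoped NNReal

/-!
The difference `G_b(s,t) - G_p(s,t)` is at most a multiple of `∑ u, G(s,u) r^|u| G(u,t)` with
`G = G_p`, by expanding both Green kernels over paths and telescoping the products of weights.
Choose for each `u` the median `x` of the geodesic tripod with end points `s`, `t`, `u`, stopped at
`y` if `u` does not lie above the common suffix `y` of `s` and `t`. The Ancona inequality
`G(s,u) ≤ c G(s,x) G(x,u)`, valid for `x` between `s` and `u` because the range is finite and the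
Green kernel satisfies a Harnack inequality, bounds the summand by a multiple of
`G(s,t) G(x,u) r^|u| G(u,x)`. By (H4) the return probabilities `p⁽ⁿ⁾(x,x)` are at most `λⁿ`; if `r`
is close enough to `1`, a loop at `x` decays faster than `r^|u|` can grow along it, so summing over
`u` leaves `r^|x|`. Finally `x` is a suffix of `s` or of `t` which is at least as long as `y`, so
the sum over `x` is geometric and the relative error is at most a multiple of `r^|y|`.
-/

local notation "G" => greenE Set.univ

section Kernel

variable {X : Type*} {p : X → X → ℝ}

/-! ### Path sums and the Green kernel -/

/-- A path of `n + 1` steps from `s` is its second point together with a path of `n` steps. -/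
def pathSetSuccEquiv (n : ℕ) (s t : X) :
    pathSet Set.univ (n + 1) s t ≃ Σ v, pathSet Set.univ n v t where
  toFun σ := ⟨σ.1 1, Fin.tail σ.1, rfl, σ.2.2.1, fun _ => trivial⟩
  invFun τ := ⟨Fin.cons s τ.2.1, rfl, by
    rw [← Fin.succ_last, Fin.cons_succ]; exact τ.2.2.2.1, fun _ => trivial⟩
  left_inv := by
    rintro ⟨σ, rfl, -, -⟩
    exact Subtype.ext (Fin.cons_self_tail σ)
  right_inv := by
    rintro ⟨v, τ, rfl, -, -⟩
    rfl

lemma tsum_pathSet_succ (n : ℕ) (s t : X) (H : (Fin (n + 2) → X) → ℝ≥0∞) :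
    ∑' σ : pathSet Set.univ (n + 1) s t, H σ =
      ∑' v, ∑' τ : pathSet Set.univ n v t, H (Fin.cons s τ.1) := by
  rw [← (pathSetSuccEquiv n s t).symm.tsum_eq, ENNReal.tsum_sigma']
  rfl

lemma weightE_cons (p : X → X → ℝ) (n : ℕ) (s : X) (τ : Fin (n + 1) → X) :
    weightE p (n + 1) (Fin.cons s τ) = ENNReal.ofReal (p s (τ 0)) * weightE p n τ := by
  simp [weightE, Fin.prod_univ_succ]

lemma weightR_cons (p : X → X → ℝ) (n : ℕ) (s : X) (τ : Fin (n + 1) → X) :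
    weightR p (n + 1) (Fin.cons s τ) = p s (τ 0) * weightR p n τ := by
  simp [weightR, Fin.prod_univ_succ]

lemma nStepE_zero [DecidableEq X] (p : X → X → ℝ) (s t : X) :
    nStepE Set.univ p 0 s t = if s = t then 1 else 0 := by
  split_ifs with hst
  · subst hst
    have : Unique (pathSet Set.univ 0 s s) :=
      { default := ⟨fun _ => s, rfl, rfl, fun _ => trivial⟩
        uniq := fun σ => Subtype.ext (funext fun i => by rw [Fin.eq_zero i]; exact σ.2.1) }
    simp [nStepE, weightE]
  · have : IsEmpty (pathSet Set.univ 0 s t) := ⟨fun σ => hst (σ.2.1.symm.trans σ.2.2.1)⟩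
    exact tsum_empty

lemma nStepE_succ (p : X → X → ℝ) (n : ℕ) (s t : X) :
    nStepE Set.univ p (n + 1) s t =
      ∑' v, ENNReal.ofReal (p s v) * nStepE Set.univ p n v t := by
  rw [nStepE, tsum_pathSet_succ]
  refine tsum_congr fun v => ?_
  rw [nStepE, ← ENNReal.tsum_mul_left]
  refine tsum_congr fun τ => ?_
  rw [weightE_cons, τ.2.1]

lemma nStepE_add (p : X → X → ℝ) (i j : ℕ) (x y : X) :
    nStepE Set.univ p (i + j) x y =
      ∑' u, nStepE Set.univ p i x u * nStepE Set.univ p j u y := by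
  classical
  induction i generalizing x with
  | zero => simp [nStepE_zero]
  | succ i ih =>
    simp only [Nat.succ_add, nStepE_succ, ih, ← ENNReal.tsum_mul_right, ← ENNReal.tsum_mul_left]
    rw [ENNReal.tsum_comm]
    simp only [mul_assoc]

lemma exists_step_of_nStepE_succ_ne_zero {n : ℕ} {s t : X}
    (h : nStepE Set.univ p (n + 1) s t ≠ 0) :
    ∃ v, p s v ≠ 0 ∧ nStepE Set.univ p n v t ≠ 0 := by
  rw [nStepE_succ, Ne, ENNReal.tsum_eq_zero, not_forall] at h
  obtain ⟨v, hv⟩ := h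
  exact ⟨v, fun h0 => hv (by simp [h0]), right_ne_zero_of_mul hv⟩

lemma sum_range_succ_nStepE [DecidableEq X] (p : X → X → ℝ) (N : ℕ) (s t : X) :
    ∑ n ∈ Finset.range (N + 1), nStepE Set.univ p n s t =
      (if s = t then 1 else 0) +
        ∑' v, ENNReal.ofReal (p s v) * ∑ n ∈ Finset.range N, nStepE Set.univ p n v t := by
  simp only [Finset.sum_range_succ', nStepE_zero, nStepE_succ, Finset.mul_sum, add_comm]
  rw [Summable.tsum_finsetSum fun _ _ => ENNReal.summable]

lemma greenE_eq_ite_add [DecidableEq X] (p : X → X → ℝ) (s t : X) :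
    G p s t = (if s = t then 1 else 0) + ∑' v, ENNReal.ofReal (p s v) * G p v t := by
  simp only [greenE, ← ENNReal.tsum_mul_left]
  rw [tsum_eq_zero_add' ENNReal.summable, nStepE_zero, ENNReal.tsum_comm]
  simp only [nStepE_succ]

lemma tsum_mul_greenE_le (p : X → X → ℝ) (s t : X) :
    ∑' v, ENNReal.ofReal (p s v) * G p v t ≤ G p s t := by
  classical
  rw [greenE_eq_ite_add p s t]
  exact le_add_self

lemma mul_greenE_le (p : X → X → ℝ) (s v t : X) :
    ENNReal.ofReal (p s v) * G p v t ≤ G p s t :=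
  (ENNReal.le_tsum v).trans (tsum_mul_greenE_le p s t)

lemma one_le_greenE_self (p : X → X → ℝ) (s : X) : 1 ≤ G p s s := by
  classical
  rw [greenE_eq_ite_add, if_pos rfl]
  exact le_self_add

lemma add_tsum_mul_tsum_greenE_eq (p : X → X → ℝ) (f : X → ℝ≥0∞) (s : X) :
    f s + ∑' v, ENNReal.ofReal (p s v) * ∑' u, G p v u * f u = ∑' u, G p s u * f u := by
  classical
  have hG (u : X) : G p s u * f u =
      (if s = u then f u else 0) + ∑' v, ENNReal.ofReal (p s v) * (G p v u * f u) := by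
    rw [greenE_eq_ite_add, add_mul, ← ENNReal.tsum_mul_right]
    simp only [mul_assoc, ite_mul, one_mul, zero_mul]
  simp only [hG, ENNReal.tsum_add, ← ENNReal.tsum_mul_left]
  rw [ENNReal.tsum_comm, tsum_eq_single s fun u hu => if_neg hu.symm, if_pos rfl]

-- The partial sums of `G p · u` are compared with `H` by induction on the number of steps.
lemma greenE_mul_le_of_superharmonic {A B : Set X} {u : X} {c : ℝ≥0∞} {H : X → ℝ≥0∞}
    (hu : u ∉ A) (hB : ∀ s ∈ B, G p s u * c ≤ H s)
    (hstep : ∀ s ∈ A, ∀ v, p s v ≠ 0 → v ∈ A ∪ B)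
    (hH : ∀ s ∈ A, ∑' v, ENNReal.ofReal (p s v) * H v ≤ H s) {s : X} (hs : s ∈ A ∪ B) :
    G p s u * c ≤ H s := by
  classical
  rw [greenE, ENNReal.tsum_eq_iSup_nat, ENNReal.iSup_mul]
  refine iSup_le fun N => ?_
  induction N generalizing s with
  | zero => simp
  | succ N ih =>
    rcases hs with hsA | hsB
    · rw [sum_range_succ_nStepE, if_neg (ne_of_mem_of_not_mem hsA hu), zero_add,
        ← ENNReal.tsum_mul_right]
      refine le_trans (ENNReal.tsum_le_tsum fun v => ?_) (hH s hsA)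
      rcases eq_or_ne (p s v) 0 with hv | hv
      · simp [hv]
      · rw [mul_assoc]
        gcongr
        exact ih (hstep s hsA v hv)
    · exact le_trans (by gcongr; exact ENNReal.sum_le_tsum _) (hB s hsB)

lemma greenE_mul_greenE_le (p : X → X → ℝ) (s x t : X) :
    G p s x * G p x t ≤ G p x x * G p s t := by
  refine greenE_mul_le_of_superharmonic (p := p) (A := {x}ᶜ) (B := {x})
    (H := fun s => G p x x * G p s t) (by simp) (by simp) (fun _ _ v _ => em' (v = x))
    (fun s _ => ?_) (em' (s = x))
  simp only [mul_left_comm _ (G p x x), ENNReal.tsum_mul_left]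
  gcongr
  exact tsum_mul_greenE_le p s t

lemma greenE_mul_mul_greenE_le {c g : ℝ≥0∞} {s t u x : X}
    (hsu : G p s u ≤ c * (G p s x * G p x u)) (hut : G p u t ≤ c * (G p u x * G p x t))
    (hg : G p x x ≤ g) (a : ℝ≥0∞) :
    G p s u * (a * G p u t) ≤ c ^ 2 * g * G p s t * (G p x u * (a * G p u x)) := by
  calc G p s u * (a * G p u t)
      ≤ (c * (G p s x * G p x u)) * (a * (c * (G p u x * G p x t))) := by gcongr
    _ = c ^ 2 * (G p x u * (a * G p u x)) * (G p s x * G p x t) := by ring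
    _ ≤ c ^ 2 * (G p x u * (a * G p u x)) * (g * G p s t) :=
        mul_le_mul_right ((greenE_mul_greenE_le p s x t).trans (mul_le_mul_left hg _)) _
    _ = _ := by ring

lemma greenE_le_mul_greenE {M g : ℝ≥0∞} {v x : X} (hg : G p v v ≤ g)
    (h : G p x x ≤ M * G p v x) (s : X) : G p s v ≤ M * g * G p s x := by
  calc G p s v = G p s v * 1 := (mul_one _).symm
    _ ≤ G p s v * (M * G p v x) := by gcongr; exact (one_le_greenE_self p x).trans h
    _ = M * (G p s v * G p v x) := mul_left_comm _ _ _
    _ ≤ M * (G p v v * G p s x) := mul_le_mul_right (greenE_mul_greenE_le p s v x) M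
    _ ≤ M * (g * G p s x) := by gcongr
    _ = M * g * G p s x := (mul_assoc _ _ _).symm

lemma greenE_le_inv_pow_mul {δ : ℝ≥0} (hδ : δ ≠ 0) {n : ℕ} {u : ℕ → X}
    (hu : ∀ i < n, δ ≤ p (u i) (u (i + 1))) (t : X) :
    G p (u n) t ≤ (δ⁻¹ : ℝ≥0) ^ n * G p (u 0) t := by
  induction n with
  | zero => simp
  | succ n ih =>
    have hstep : δ * G p (u (n + 1)) t ≤ G p (u n) t := by
      refine le_trans ?_ (mul_greenE_le p (u n) (u (n + 1)) t)
      gcongr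
      rw [← ENNReal.ofReal_coe_nnreal]
      exact ENNReal.ofReal_le_ofReal (hu n n.lt_succ_self)
    calc G p (u (n + 1)) t = (δ⁻¹ : ℝ≥0) * (δ * G p (u (n + 1)) t) := by
          rw [← mul_assoc, ← ENNReal.coe_mul, inv_mul_cancel₀ hδ, ENNReal.coe_one, one_mul]
      _ ≤ (δ⁻¹ : ℝ≥0) * ((δ⁻¹ : ℝ≥0) ^ n * G p (u 0) t) :=
          mul_le_mul_right (hstep.trans (ih fun i hi => hu i (hi.trans n.lt_succ_self))) _
      _ = (δ⁻¹ : ℝ≥0) ^ (n + 1) * G p (u 0) t := by rw [pow_succ', mul_assoc]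

lemma greenE_le_sum_of_crossing (A : Set X) (B : Finset X) {s u : X} (hs : s ∈ A) (hu : u ∉ A)
    (hcross : ∀ v ∈ A, ∀ w ∉ A, p v w ≠ 0 → v ∈ B ∨ w ∈ B) :
    G p s u ≤ ∑ v ∈ B, G p s v * G p v u := by
  have hdom := greenE_mul_le_of_superharmonic (p := p) (A := A \ B) (B := B) (u := u) (c := 1)
    (H := fun s => ∑ v ∈ B, G p s v * G p v u) (fun h => hu h.1) (fun v hv => ?_)
    (fun v hv w hvw => ?_) (fun v _ => ?_) (s := s)
    (by rw [Set.sdiff_union_self]; exact Or.inl hs)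
  · simpa only [mul_one] using hdom
  · calc G p v u * 1 ≤ G p v v * G p v u := by
          rw [mul_comm]; gcongr; exact one_le_greenE_self p v
      _ ≤ _ := Finset.single_le_sum (f := fun w => G p v w * G p w u) (fun _ _ => zero_le) hv
  · rw [Set.sdiff_union_self]
    exact or_iff_not_imp_left.2 fun hw => (hcross v hv.1 w hw hvw).resolve_left hv.2
  · calc ∑' w, ENNReal.ofReal (p v w) * ∑ x ∈ B, G p w x * G p x u
        = ∑ x ∈ B, (∑' w, ENNReal.ofReal (p v w) * G p w x) * G p x u := by
          simp only [Finset.mul_sum, ← ENNReal.tsum_mul_right, ← mul_assoc]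
          rw [Summable.tsum_finsetSum fun _ _ => ENNReal.summable]
      _ ≤ ∑ x ∈ B, G p v x * G p x u := by
          gcongr
          exact tsum_mul_greenE_le p v _

/-! ### Return probabilities from the `ℓ²` norm -/

lemma finite_setOf_nStepE_ne_zero (hcol : ∀ t, {s | p s t ≠ 0}.Finite) (n : ℕ) (x : X) :
    {s | nStepE Set.univ p n s x ≠ 0}.Finite := by
  classical
  induction n with
  | zero =>
    refine (Set.finite_singleton x).subset fun s hs => ?_
    simpa [nStepE_zero] using hs
  | succ n ih =>
    refine (ih.biUnion fun t _ => hcol t).subset fun s hs => ?_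
    obtain ⟨t, hst, ht⟩ := exists_step_of_nStepE_succ_ne_zero hs
    exact Set.mem_biUnion ht hst

lemma nStepE_ne_top (hcol : ∀ t, {s | p s t ≠ 0}.Finite) (n : ℕ) (s x : X) :
    nStepE Set.univ p n s x ≠ ⊤ := by
  classical
  induction n generalizing s with
  | zero => rw [nStepE_zero]; split_ifs <;> simp
  | succ n ih =>
    rw [nStepE_succ, tsum_eq_sum (s := (finite_setOf_nStepE_ne_zero hcol n x).toFinset)]
    · exact ENNReal.sum_ne_top.2 fun t _ => ENNReal.mul_ne_top ENNReal.ofReal_ne_top (ih t)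
    · simp +contextual

lemma toReal_nStepE_succ (hp : ∀ s t, 0 ≤ p s t) (hcol : ∀ t, {s | p s t ≠ 0}.Finite)
    (n : ℕ) (s x : X) :
    (nStepE Set.univ p (n + 1) s x).toReal =
      ∑' t, p s t * (nStepE Set.univ p n t x).toReal := by
  rw [nStepE_succ, ENNReal.tsum_toReal_eq fun t =>
    ENNReal.mul_ne_top ENNReal.ofReal_ne_top (nStepE_ne_top hcol n t x)]
  simp only [ENNReal.toReal_mul, ENNReal.toReal_ofReal (hp s _)]

lemma sqrt_tsum_sq_le_of_opNormBound {m : X → ℝ} {lam : ℝ} (hm : ∀ x, 0 ≤ m x) (hlam : 0 ≤ lam)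
    (h : opNormBound m p lam) {f g : X → ℝ} (hf : f.support.Finite) (hg : g.support.Finite)
    (hfg : ∀ s, g s = ∑' t, p s t * f t) :
    √(∑' s, m s * g s ^ 2) ≤ lam * √(∑' s, m s * f s ^ 2) := by
  have hgg : ∑' s, m s * g s * ∑' t, p s t * f t = √(∑' s, m s * g s ^ 2) ^ 2 := by
    rw [Real.sq_sqrt (tsum_nonneg fun s => mul_nonneg (hm s) (sq_nonneg _))]
    exact tsum_congr fun s => by rw [← hfg]; ring
  have hle := (le_abs_self _).trans (h f g hf hg)
  rw [hgg, sq] at hle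
  rcases (Real.sqrt_nonneg (∑' s, m s * g s ^ 2)).eq_or_lt with h0 | hpos
  · rw [← h0]; positivity
  · exact le_of_mul_le_mul_right hle hpos

lemma sqrt_tsum_sq_nStepE_le {m : X → ℝ} {lam : ℝ} (hp : ∀ s t, 0 ≤ p s t)
    (hcol : ∀ t, {s | p s t ≠ 0}.Finite) (hm : ∀ x, 0 ≤ m x) (hlam : 0 ≤ lam)
    (h : opNormBound m p lam) (n : ℕ) (x : X) :
    √(∑' s, m s * (nStepE Set.univ p n s x).toReal ^ 2) ≤ lam ^ n * √(m x) := by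
  classical
  have hfin (n : ℕ) : (Function.support fun s => (nStepE Set.univ p n s x).toReal).Finite :=
    (finite_setOf_nStepE_ne_zero hcol n x).subset fun s hs h0 => hs (by simp [h0])
  induction n with
  | zero =>
    rw [tsum_eq_single x fun s hs => by simp [nStepE_zero, hs]]
    simp [nStepE_zero]
  | succ n ih =>
    calc √(∑' s, m s * (nStepE Set.univ p (n + 1) s x).toReal ^ 2)
        ≤ lam * √(∑' s, m s * (nStepE Set.univ p n s x).toReal ^ 2) :=
          sqrt_tsum_sq_le_of_opNormBound hm hlam h (hfin n) (hfin (n + 1))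
            fun s => toReal_nStepE_succ hp hcol n s x
      _ ≤ lam * (lam ^ n * √(m x)) := by gcongr
      _ = lam ^ (n + 1) * √(m x) := by ring

lemma nStepE_self_le {m : X → ℝ} {lam : ℝ} (hp : ∀ s t, 0 ≤ p s t)
    (hcol : ∀ t, {s | p s t ≠ 0}.Finite) (hm : ∀ x, 0 < m x) (hlam : 0 ≤ lam)
    (h : opNormBound m p lam) (n : ℕ) (x : X) :
    nStepE Set.univ p n x x ≤ ENNReal.ofReal lam ^ n := by
  set f : X → ℝ := fun s => (nStepE Set.univ p n s x).toReal
  have hnonneg (s : X) : 0 ≤ m s * f s ^ 2 := mul_nonneg (hm s).le (sq_nonneg _)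
  have hsummable : Summable fun s => m s * f s ^ 2 := by
    refine summable_of_hasFiniteSupport
      ((finite_setOf_nStepE_ne_zero hcol n x).subset fun s hs h0 => hs ?_)
    simp [f, h0]
  have hle : f x * √(m x) ≤ lam ^ n * √(m x) := by
    calc f x * √(m x) = √(m x * f x ^ 2) := by
          rw [Real.sqrt_mul (hm x).le, Real.sqrt_sq ENNReal.toReal_nonneg, mul_comm]
      _ ≤ √(∑' s, m s * f s ^ 2) :=
          Real.sqrt_le_sqrt (hsummable.le_tsum x fun s _ => hnonneg s)
      _ ≤ lam ^ n * √(m x) :=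
          sqrt_tsum_sq_nStepE_le hp hcol (fun s => (hm s).le) hlam h n x
  rw [← ENNReal.ofReal_pow hlam, ← ENNReal.ofReal_toReal (nStepE_ne_top hcol n x x)]
  exact ENNReal.ofReal_le_ofReal (le_of_mul_le_mul_right hle (Real.sqrt_pos.2 (hm x)))

lemma tsum_coe_geometric {a : ℝ≥0} (ha : a < 1) :
    ∑' n : ℕ, (a : ℝ≥0∞) ^ n = ((1 - a)⁻¹ : ℝ≥0) := by
  rw [ENNReal.tsum_geometric, ENNReal.coe_inv (tsub_pos_of_lt ha).ne', ENNReal.coe_sub,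
    ENNReal.coe_one]

lemma exists_greenE_self_le {Λ : ℝ≥0} (hΛ : Λ < 1)
    (hself : ∀ n x, nStepE Set.univ p n x x ≤ (Λ : ℝ≥0∞) ^ n) :
    ∃ g : ℝ≥0, ∀ x, G p x x ≤ g :=
  ⟨(1 - Λ)⁻¹, fun x => by
    rw [← tsum_coe_geometric hΛ]
    exact ENNReal.tsum_le_tsum fun n => hself n x⟩

/-! ### Weighted sums over loops -/

lemma le_add_mul_of_nStepE_ne_zero {ℓ : X → ℕ} {S : ℕ} (hℓ : ∀ s t, p s t ≠ 0 → ℓ s ≤ ℓ t + S)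
    {n : ℕ} {s t : X} (h : nStepE Set.univ p n s t ≠ 0) : ℓ s ≤ ℓ t + n * S := by
  classical
  induction n generalizing s with
  | zero =>
    have hst : s = t := by simpa [nStepE_zero] using h
    simp [hst]
  | succ n ih =>
    obtain ⟨v, hsv, hv⟩ := exists_step_of_nStepE_succ_ne_zero h
    have := hℓ s v hsv
    have := ih hv
    rw [Nat.succ_mul]
    lia

lemma tsum_greenE_mul_eq (p : X → X → ℝ) (w : X → ℝ≥0∞) (x y : X) :
    ∑' u, G p x u * (w u * G p u y) =
      ∑' i, ∑' j, ∑' u, nStepE Set.univ p i x u * (w u * nStepE Set.univ p j u y) := by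
  calc ∑' u, G p x u * (w u * G p u y)
      = ∑' u, ∑' i, ∑' j, nStepE Set.univ p i x u * (w u * nStepE Set.univ p j u y) := by
        simp only [greenE, ENNReal.tsum_mul_right, ENNReal.tsum_mul_left]
    _ = ∑' i, ∑' u, ∑' j, nStepE Set.univ p i x u * (w u * nStepE Set.univ p j u y) :=
        ENNReal.tsum_comm
    _ = _ := tsum_congr fun _ => ENNReal.tsum_comm

-- A path of length `i` from `x` to `u` has `ℓ x ≤ ℓ u + i * S`, so inserting the weight `r ^ ℓ u`
-- into the loops through `u` costs at most a factor `r ^ ℓ x * ((r ^ S)⁻¹) ^ i`.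
lemma tsum_nStepE_mul_pow_mul_le {ℓ : X → ℕ} {S : ℕ} (hℓ : ∀ s t, p s t ≠ 0 → ℓ s ≤ ℓ t + S)
    {r : ℝ≥0} (hr0 : r ≠ 0) (hr1 : r ≤ 1) (i j : ℕ) (x y : X) :
    ∑' u, nStepE Set.univ p i x u * ((r : ℝ≥0∞) ^ ℓ u * nStepE Set.univ p j u y) ≤
      ((r ^ S)⁻¹ : ℝ≥0) ^ i * (r : ℝ≥0∞) ^ ℓ x * nStepE Set.univ p (i + j) x y := by
  rw [nStepE_add, ← ENNReal.tsum_mul_left]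
  refine ENNReal.tsum_le_tsum fun u => ?_
  rcases eq_or_ne (nStepE Set.univ p i x u) 0 with h0 | h0
  · simp [h0]
  have hpow : r ^ ℓ u ≤ ((r ^ S)⁻¹) ^ i * r ^ ℓ x := by
    rw [inv_pow, le_inv_mul_iff₀ (by positivity), ← pow_mul, ← pow_add]
    refine pow_le_pow_right_of_le_one' hr1 ?_
    rw [add_comm, mul_comm S]
    exact le_add_mul_of_nStepE_ne_zero hℓ h0
  rw [mul_left_comm]
  gcongr
  exact_mod_cast hpow

lemma exists_tsum_loop_le {ℓ : X → ℕ} {S : ℕ} (hℓ : ∀ s t, p s t ≠ 0 → ℓ s ≤ ℓ t + S)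
    {Λ r : ℝ≥0} (hself : ∀ n x, nStepE Set.univ p n x x ≤ (Λ : ℝ≥0∞) ^ n) (hΛ : Λ < 1)
    (hr0 : r ≠ 0) (hr1 : r ≤ 1) (hΛr : Λ < r ^ S) :
    ∃ c : ℝ≥0, ∀ x, ∑' u, G p x u * ((r : ℝ≥0∞) ^ ℓ u * G p u x) ≤ c * (r : ℝ≥0∞) ^ ℓ x := by
  set ρ : ℝ≥0 := (r ^ S)⁻¹ * Λ
  have hρ : ρ < 1 := by rwa [inv_mul_lt_iff₀ (by positivity), mul_one]
  refine ⟨(1 - ρ)⁻¹ * (1 - Λ)⁻¹, fun x => ?_⟩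
  calc ∑' u, G p x u * ((r : ℝ≥0∞) ^ ℓ u * G p u x)
      = ∑' i, ∑' j, ∑' u,
          nStepE Set.univ p i x u * ((r : ℝ≥0∞) ^ ℓ u * nStepE Set.univ p j u x) :=
        tsum_greenE_mul_eq p _ x x
    _ ≤ ∑' i, ∑' j, (ρ : ℝ≥0∞) ^ i * (Λ : ℝ≥0∞) ^ j * (r : ℝ≥0∞) ^ ℓ x := by
        refine ENNReal.tsum_le_tsum fun i => ENNReal.tsum_le_tsum fun j => ?_
        calc _ ≤ ((r ^ S)⁻¹ : ℝ≥0) ^ i * (r : ℝ≥0∞) ^ ℓ x * nStepE Set.univ p (i + j) x x :=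
              tsum_nStepE_mul_pow_mul_le hℓ hr0 hr1 i j x x
          _ ≤ ((r ^ S)⁻¹ : ℝ≥0) ^ i * (r : ℝ≥0∞) ^ ℓ x * (Λ : ℝ≥0∞) ^ (i + j) := by
              gcongr; exact hself _ _
          _ = _ := by simp only [ρ, ENNReal.coe_mul]; ring
    _ = _ := by
        simp only [ENNReal.tsum_mul_right, ENNReal.tsum_mul_left, tsum_coe_geometric hρ,
          tsum_coe_geometric hΛ, ENNReal.coe_mul]

/-! ### Comparison of the Green kernels of a kernel and a signed perturbation -/

section Perturbation

variable {b : X → X → ℝ}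

lemma enorm_weightR (b : X → X → ℝ) (n : ℕ) (σ : Fin (n + 1) → X) :
    ‖weightR b n σ‖ₑ = weightE (fun s t => |b s t|) n σ := by
  rw [Real.enorm_eq_ofReal_abs, weightR, Finset.abs_prod,
    ENNReal.ofReal_prod_of_nonneg fun _ _ => abs_nonneg _, weightE]

lemma enorm_weightR_le (hb : ∀ s t, |b s t| ≤ p s t) (n : ℕ) (σ : Fin (n + 1) → X) :
    ‖weightR b n σ‖ₑ ≤ weightE p n σ := by
  rw [enorm_weightR]
  exact Finset.prod_le_prod' fun _ _ => ENNReal.ofReal_le_ofReal (hb _ _)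

lemma toReal_weightE (hp : ∀ s t, 0 ≤ p s t) (n : ℕ) (σ : Fin (n + 1) → X) :
    (weightE p n σ).toReal = weightR p n σ := by
  simp only [weightE, weightR, ENNReal.toReal_prod, ENNReal.toReal_ofReal (hp _ _)]

lemma enorm_tsum_sub_toReal_tsum_le {ι : Type*} {f : ι → ℝ} {g : ι → ℝ≥0∞}
    (hfg : ∀ i, ‖f i‖ₑ ≤ g i) (hg : ∑' i, g i ≠ ⊤) :
    ‖∑' i, f i - (∑' i, g i).toReal‖ₑ ≤ ∑' i, ‖f i - (g i).toReal‖ₑ := by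
  have hgi (i : ι) : g i ≠ ⊤ := ENNReal.ne_top_of_tsum_ne_top hg i
  have hg_summable : Summable fun i => (g i).toReal := ENNReal.summable_toReal hg
  have hf_summable : Summable f := hg_summable.of_norm_bounded fun i => by
    simpa using ENNReal.toReal_mono (hgi i) (hfg i)
  rw [ENNReal.tsum_toReal_eq hgi, ← hf_summable.tsum_sub hg_summable]
  exact enorm_tsum_le_tsum_enorm

lemma enorm_nStepR_le (hb : ∀ s t, |b s t| ≤ p s t) (n : ℕ) (s t : X) :
    ‖nStepR Set.univ b n s t‖ₑ ≤ nStepE Set.univ p n s t :=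
  enorm_tsum_le_tsum_enorm.trans (ENNReal.tsum_le_tsum fun _ => enorm_weightR_le hb n _)

/-- The total variation between the weights which `b` and `p` give to the paths of `n` steps
from `s` to `t`. -/
noncomputable def pathVariation (p b : X → X → ℝ) (n : ℕ) (s t : X) : ℝ≥0∞ :=
  ∑' σ : pathSet Set.univ n s t, ‖weightR b n σ.1 - weightR p n σ.1‖ₑ

lemma pathVariation_zero (p b : X → X → ℝ) (s t : X) : pathVariation p b 0 s t = 0 := by
  simp [pathVariation, weightR]

lemma pathVariation_succ_le (hp : ∀ s t, 0 ≤ p s t) (n : ℕ) (s t : X) {e : ℝ≥0∞}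
    (he : ∀ v, ‖b s v - p s v‖ₑ ≤ e * ENNReal.ofReal (p s v)) :
    pathVariation p b (n + 1) s t ≤
      ∑' v, ‖b s v‖ₑ * pathVariation p b n v t + e * nStepE Set.univ p (n + 1) s t := by
  rw [pathVariation, tsum_pathSet_succ n s t fun σ => ‖weightR b (n + 1) σ - weightR p (n + 1) σ‖ₑ,
    nStepE_succ, ← ENNReal.tsum_mul_left, ← ENNReal.tsum_add]
  refine ENNReal.tsum_le_tsum fun v => ?_
  rw [pathVariation, nStepE, ← mul_assoc, ← ENNReal.tsum_mul_left, ← ENNReal.tsum_mul_left,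
    ← ENNReal.tsum_add]
  refine ENNReal.tsum_le_tsum fun τ => ?_
  rw [weightR_cons, weightR_cons, τ.2.1]
  calc ‖b s v * weightR b n τ.1 - p s v * weightR p n τ.1‖ₑ
      = ‖b s v * (weightR b n τ.1 - weightR p n τ.1) + (b s v - p s v) * weightR p n τ.1‖ₑ := by
        ring_nf
    _ ≤ ‖b s v‖ₑ * ‖weightR b n τ.1 - weightR p n τ.1‖ₑ +
          ‖b s v - p s v‖ₑ * ‖weightR p n τ.1‖ₑ := by
        rw [← enorm_mul, ← enorm_mul]
        exact enorm_add_le _ _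
    _ ≤ _ := by
        gcongr
        · exact he v
        · exact enorm_weightR_le (fun u w => (abs_of_nonneg (hp u w)).le) n _

-- The right-hand side is the solution `H` of `H s = e s * G p s t + ∑ v, p s v * H v`.
lemma tsum_pathVariation_le {Ω : Set X} (hb : ∀ s t, |b s t| ≤ p s t)
    (hout : ∀ u, ∀ v ∉ Ω, b u v = 0) {e : X → ℝ≥0∞}
    (he : ∀ u ∈ Ω, ∀ v, ‖b u v - p u v‖ₑ ≤ e u * ENNReal.ofReal (p u v)) {s : X} (hs : s ∈ Ω)
    (t : X) :
    ∑' n, pathVariation p b n s t ≤ ∑' u, G p s u * (e u * G p u t) := by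
  rw [ENNReal.tsum_eq_iSup_nat]
  refine iSup_le fun N => ?_
  induction N generalizing s with
  | zero => simp
  | succ N ih =>
    rw [Finset.sum_range_succ', pathVariation_zero, add_zero, ← add_tsum_mul_tsum_greenE_eq]
    calc ∑ n ∈ Finset.range N, pathVariation p b (n + 1) s t
        ≤ ∑ n ∈ Finset.range N, (∑' v, ‖b s v‖ₑ * pathVariation p b n v t +
            e s * nStepE Set.univ p (n + 1) s t) :=
          Finset.sum_le_sum fun n _ =>
            pathVariation_succ_le (fun u v => (abs_nonneg _).trans (hb u v)) n s t (he s hs)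
      _ = e s * ∑ n ∈ Finset.range N, nStepE Set.univ p (n + 1) s t +
            ∑' v, ‖b s v‖ₑ * ∑ n ∈ Finset.range N, pathVariation p b n v t := by
          simp only [Finset.sum_add_distrib, Finset.mul_sum]
          rw [add_comm, Summable.tsum_finsetSum fun _ _ => ENNReal.summable]
      _ ≤ e s * G p s t +
            ∑' v, ENNReal.ofReal (p s v) * ∑' u, G p v u * (e u * G p u t) := by
          gcongr ?_ + ∑' v, ?_ with v
          · gcongr
            rw [greenE, tsum_eq_zero_add' ENNReal.summable]
            exact (ENNReal.sum_le_tsum _).trans le_add_self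
          · by_cases hv : v ∈ Ω
            · gcongr
              · rw [Real.enorm_eq_ofReal_abs]
                exact ENNReal.ofReal_le_ofReal (hb s v)
              · exact ih hv
            · simp [hout s v hv]

lemma enorm_greenR_sub_le {Ω : Set X} (hb : ∀ s t, |b s t| ≤ p s t)
    (hout : ∀ u, ∀ v ∉ Ω, b u v = 0) {e : X → ℝ≥0∞}
    (he : ∀ u ∈ Ω, ∀ v, ‖b u v - p u v‖ₑ ≤ e u * ENNReal.ofReal (p u v)) {s : X} (hs : s ∈ Ω)
    {t : X} (hfin : G p s t ≠ ⊤) :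
    ‖greenR Set.univ b s t - (G p s t).toReal‖ₑ ≤ ∑' u, G p s u * (e u * G p u t) := by
  have hp (u v : X) : 0 ≤ p u v := (abs_nonneg _).trans (hb u v)
  have hvar (n : ℕ) : ‖nStepR Set.univ b n s t - (nStepE Set.univ p n s t).toReal‖ₑ ≤
      pathVariation p b n s t := by
    have := enorm_tsum_sub_toReal_tsum_le (fun σ : pathSet Set.univ n s t =>
      enorm_weightR_le hb n σ.1) (ENNReal.ne_top_of_tsum_ne_top hfin n)
    simpa only [toReal_weightE hp, nStepR, nStepE, pathVariation] using this
  calc ‖greenR Set.univ b s t - (G p s t).toReal‖ₑ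
      ≤ ∑' n, ‖nStepR Set.univ b n s t - (nStepE Set.univ p n s t).toReal‖ₑ :=
        enorm_tsum_sub_toReal_tsum_le (fun n => enorm_nStepR_le hb n s t) hfin
    _ ≤ ∑' n, pathVariation p b n s t := ENNReal.tsum_le_tsum hvar
    _ ≤ _ := tsum_pathVariation_le hb hout he hs t

open Classical in
/-- The kernel `b` on `Ω`, extended by zero to all of `X`. -/
noncomputable def extendByZero (Ω : Set X) (b : X → X → ℝ) (u v : X) : ℝ :=
  if u ∈ Ω ∧ v ∈ Ω then b u v else 0

lemma extendByZero_of_mem {Ω : Set X} {u v : X} (hu : u ∈ Ω) (hv : v ∈ Ω) :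
    extendByZero Ω b u v = b u v :=
  if_pos ⟨hu, hv⟩

lemma extendByZero_of_notMem {Ω : Set X} (u : X) {v : X} (hv : v ∉ Ω) :
    extendByZero Ω b u v = 0 :=
  if_neg fun h => hv h.2

lemma nStepR_eq_nStepR_extendByZero {Ω : Set X} (b : X → X → ℝ) (n : ℕ) {s : X} (hs : s ∈ Ω)
    (t : X) : nStepR Ω b n s t = nStepR Set.univ (extendByZero Ω b) n s t := by
  have hsub : pathSet Ω n s t ⊆ pathSet Set.univ n s t := fun σ hσ =>
    ⟨hσ.1, hσ.2.1, fun _ => trivial⟩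
  rw [nStepR, nStepR, tsum_subtype (pathSet Ω n s t) (weightR b n),
    tsum_subtype (pathSet Set.univ n s t) (weightR (extendByZero Ω b) n)]
  refine tsum_congr fun σ => ?_
  by_cases hσ : σ ∈ pathSet Ω n s t
  · rw [Set.indicator_of_mem hσ, Set.indicator_of_mem (hsub hσ)]
    exact Finset.prod_congr rfl fun i _ => (extendByZero_of_mem (hσ.2.2 _) (hσ.2.2 _)).symm
  · rw [Set.indicator_of_notMem hσ, eq_comm, Set.indicator_apply_eq_zero]
    intro hσ'
    obtain ⟨i, hi⟩ : ∃ i, σ i ∉ Ω := by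
      by_contra! h
      exact hσ ⟨hσ'.1, hσ'.2.1, h⟩
    cases i using Fin.cases with
    | zero => exact absurd (hσ'.1 ▸ hs) hi
    | succ j => exact Finset.prod_eq_zero (Finset.mem_univ j) (extendByZero_of_notMem _ hi)

lemma greenR_eq_greenR_extendByZero {Ω : Set X} (b : X → X → ℝ) {s : X} (hs : s ∈ Ω) (t : X) :
    greenR Ω b s t = greenR Set.univ (extendByZero Ω b) s t :=
  tsum_congr fun n => nStepR_eq_nStepR_extendByZero b n hs t

end Perturbation
end Kernel

/-! ### Suffixes and distances in the tree of words -/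

lemma lcpLen_comm (s t : Word) : lcpLen s t = lcpLen t s := by
  induction s generalizing t with
  | nil => cases t <;> rfl
  | cons a s ih =>
    cases t with
    | nil => rfl
    | cons b t => simp only [lcpLen, ih t, eq_comm]

lemma lcpLen_le_length_right (s t : Word) : lcpLen s t ≤ t.length := by
  fun_induction lcpLen s t <;> simp_all

lemma prefix_iff_length_le_lcpLen {x s t : Word} (hx : x <+: s) :
    x <+: t ↔ x.length ≤ lcpLen s t := by
  induction x generalizing s t with
  | nil => simp
  | cons c x ih =>
    obtain ⟨s, rfl⟩ := hx
    cases t with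
    | nil => simp [lcpLen]
    | cons b t =>
      have := ih (s := x ++ s) (t := t) (List.prefix_append x s)
      rw [List.cons_append, lcpLen, List.cons_prefix_cons]
      split_ifs with hcb <;> simp [hcb, this]

lemma suffix_iff_length_le_lcsLen {x s t : Word} (hx : x <:+ s) :
    x <:+ t ↔ x.length ≤ lcsLen s t := by
  rw [lcsLen, ← List.reverse_prefix, prefix_iff_length_le_lcpLen (List.reverse_prefix.2 hx),
    List.length_reverse]

lemma lcsLen_le_length_right (s t : Word) : lcsLen s t ≤ t.length :=
  (lcpLen_le_length_right _ _).trans_eq List.length_reverse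

lemma treeDist_comm (s t : Word) : treeDist s t = treeDist t s := by
  rw [treeDist, treeDist, lcsLen, lcsLen, lcpLen_comm, add_comm]

lemma treeDist_cons_self (a : Bool) (w : Word) : treeDist (a :: w) w = 1 := by
  have hle : w.length ≤ lcsLen (a :: w) w :=
    (suffix_iff_length_le_lcsLen (List.suffix_cons a w)).1 List.suffix_rfl
  rw [treeDist, hle.antisymm' (lcsLen_le_length_right _ _), List.length_cons]
  lia

lemma length_le_length_add_treeDist (s t : Word) : s.length ≤ t.length + treeDist s t := by
  have := lcsLen_le_length_right s t
  rw [treeDist]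
  lia

lemma length_le_length_add_treeDist_of_suffix {x v w : Word} (hv : x <:+ v) (hw : ¬ x <:+ w) :
    v.length ≤ x.length + treeDist v w := by
  rw [suffix_iff_length_le_lcsLen hv] at hw
  rw [treeDist]
  lia

lemma length_le_add_of_H1 {p : Word → Word → ℝ} {S : ℕ} (h1 : H1 p S) (s t : Word)
    (h : p s t ≠ 0) : s.length ≤ t.length + S := by
  have hd : treeDist s t ≤ S := not_lt.1 fun hlt => h (h1 s t hlt)
  have := length_le_length_add_treeDist s t
  lia

lemma finite_setOf_ne_zero_of_H1 {p : Word → Word → ℝ} {S : ℕ} (h1 : H1 p S) (t : Word) :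
    {s | p s t ≠ 0}.Finite :=
  (List.finite_length_le Bool (t.length + S)).subset fun s => length_le_add_of_H1 h1 s t

lemma exists_longest_common_suffix (s u : Word) :
    ∃ x : Word, x <:+ s ∧ x <:+ u ∧ (∀ w : Word, w <:+ s → w <:+ u → w <:+ x) ∧
      (s = x ∨ ∃ a, (a :: x) <:+ s ∧ ¬ (a :: x) <:+ u) := by
  induction s with
  | nil => exact ⟨[], by simp, by simp, fun w h _ => h, Or.inl rfl⟩
  | cons a s ih =>
    by_cases h : (a :: s) <:+ u
    · exact ⟨a :: s, List.suffix_rfl, h, fun w h _ => h, Or.inl rfl⟩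
    · obtain ⟨x, hxs, hxu, hmax, hx⟩ := ih
      refine ⟨x, hxs.trans (List.suffix_cons a s), hxu, fun w hw hwu => ?_, Or.inr ?_⟩
      · rcases List.suffix_cons_iff.1 hw with rfl | hw
        · exact absurd hwu h
        · exact hmax w hw hwu
      · rcases hx with rfl | ⟨c, hc, hcu⟩
        · exact ⟨a, List.suffix_rfl, h⟩
        · exact ⟨c, hc.trans (List.suffix_cons a s), hcu⟩

/-- `x` lies on the geodesic segment from `s` to `u`: either `x` is an end point, or `s` and `u`
are in different connected components of the tree with `x` removed. These components are the
complement of `Delta x` and the branches `Delta (a :: x)`. -/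
def Separates (x s u : Word) : Prop :=
  s = x ∨ u = x ∨ ¬ (x <:+ s ↔ x <:+ u) ∨ ∃ a, ¬ ((a :: x) <:+ s ↔ (a :: x) <:+ u)

lemma Separates.symm {x s u : Word} (h : Separates x s u) : Separates x u s := by
  simp only [Separates, iff_comm (a := _ <:+ u)]
  exact or_left_comm.1 h

lemma separates_of_suffix_of_not_suffix {x s u : Word} (hs : x <:+ s) (hu : ¬ x <:+ u) :
    Separates x s u :=
  Or.inr (Or.inr (Or.inl fun h => hu (h.1 hs)))

lemma exists_longest_common_suffix_separates (s u : Word) :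
    ∃ x : Word, x <:+ s ∧ x <:+ u ∧ (∀ w : Word, w <:+ s → w <:+ u → w <:+ x) ∧
      Separates x s u := by
  obtain ⟨x, hxs, hxu, hmax, hx⟩ := exists_longest_common_suffix s u
  refine ⟨x, hxs, hxu, hmax, ?_⟩
  rcases hx with hx | ⟨a, has, hau⟩
  · exact Or.inl hx
  · exact Or.inr (Or.inr (Or.inr ⟨a, fun h => hau (h.1 has)⟩))

-- The point `x` is the median of `s`, `t`, `u` if `u ∈ Delta y`, and `x = y` otherwise.
lemma exists_suffix_separates {y s t : Word} (hs : y <:+ s) (ht : y <:+ t) (u : Word) :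
    ∃ x, y <:+ x ∧ (x <:+ s ∨ x <:+ t) ∧ Separates x s u ∧ Separates x u t := by
  by_cases hu : y <:+ u
  swap
  · exact ⟨y, List.suffix_rfl, Or.inl hs, separates_of_suffix_of_not_suffix hs hu,
      (separates_of_suffix_of_not_suffix ht hu).symm⟩
  have hmedian {t c d : Word} (hcu : c <:+ u)
      (hdmax : ∀ w : Word, w <:+ t → w <:+ u → w <:+ d) (hd : Separates d t u)
      (hdc : d.length ≤ c.length) : Separates c u t := by
    by_cases hct : c <:+ t
    · rw [(hdmax c hct hcu).eq_of_length_le hdc]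
      exact hd.symm
    · exact separates_of_suffix_of_not_suffix hcu hct
  obtain ⟨c, hcs, hcu, hcmax, hc⟩ := exists_longest_common_suffix_separates s u
  obtain ⟨d, hdt, hdu, hdmax, hd⟩ := exists_longest_common_suffix_separates t u
  rcases le_total d.length c.length with hdc | hcd
  · exact ⟨c, hcmax y hs hu, Or.inl hcs, hc, hmedian hcu hdmax hd hdc⟩
  · exact ⟨d, hdmax y ht hu, Or.inr hdt, (hmedian hdu hcmax hc hcd).symm, hd.symm⟩

lemma tsum_pow_length_suffix_le (r : ℝ≥0∞) (n : ℕ) (s : Word) :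
    ∑' x : {x : Word | n ≤ x.length ∧ x <:+ s}, r ^ x.1.length ≤ r ^ n * (1 - r)⁻¹ := by
  have hinj : Function.Injective
      fun x : {x : Word | n ≤ x.length ∧ x <:+ s} => x.1.length - n := by
    rintro ⟨x, hx, hxs⟩ ⟨y, hy, hys⟩ h
    have hlen : x.length = y.length := (tsub_left_inj hx hy).1 h
    exact Subtype.ext ((List.suffix_of_suffix_length_le hxs hys hlen.le).eq_of_length hlen)
  calc ∑' x : {x : Word | n ≤ x.length ∧ x <:+ s}, r ^ x.1.length
      = ∑' x : {x : Word | n ≤ x.length ∧ x <:+ s}, r ^ n * r ^ (x.1.length - n) :=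
        tsum_congr fun x => by rw [← pow_add, Nat.add_sub_of_le x.2.1]
    _ ≤ r ^ n * ∑' j : ℕ, r ^ j := by
        rw [ENNReal.tsum_mul_left]
        gcongr
        exact ENNReal.tsum_comp_le_tsum_of_injective hinj fun j => r ^ j
    _ = r ^ n * (1 - r)⁻¹ := by rw [ENNReal.tsum_geometric]

/-! ### Harnack and Ancona inequalities -/

section Ancona

variable {p : Word → Word → ℝ} {S : ℕ} {L g : ℝ≥0}

/-- The Harnack inequality with constant `L`: moving the first argument of the Green kernel to a
neighbouring word changes its values by at most a factor `L`. -/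
def Harnack (p : Word → Word → ℝ) (L : ℝ≥0) : Prop :=
  ∀ s t, treeDist s t = 1 → ∀ u, G p t u ≤ L * G p s u

lemma exists_harnack {δ₀ : ℝ} (hδ₀ : 0 < δ₀) {K : ℕ} (h3 : H3 p δ₀ K) :
    ∃ L : ℝ≥0, Harnack p L := by
  lift δ₀ to ℝ≥0 using hδ₀.le
  refine ⟨max 1 δ₀⁻¹ ^ K, fun s t hst y => ?_⟩
  obtain ⟨n, hnK, u, rfl, rfl, hu⟩ := h3 s t hst
  calc G p (u n) y ≤ (δ₀⁻¹ : ℝ≥0) ^ n * G p (u 0) y :=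
        greenE_le_inv_pow_mul (NNReal.coe_pos.1 hδ₀).ne'
          (fun i hi => by simpa only [List.append_nil] using hu i hi []) y
    _ ≤ (max 1 δ₀⁻¹ ^ K : ℝ≥0) * G p (u 0) y := by
        gcongr
        exact_mod_cast (pow_le_pow_left' (le_max_right 1 δ₀⁻¹) n).trans
          (pow_le_pow_right' (le_max_left 1 δ₀⁻¹) hnK)

lemma Harnack.greenE_append_le (hL : Harnack p L) (w x u : Word) :
    G p (w ++ x) u ≤ L ^ w.length * G p x u := by
  induction w with
  | nil => simp
  | cons a w ih =>
    calc G p (a :: (w ++ x)) u ≤ L * G p (w ++ x) u :=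
          hL _ _ (by rw [treeDist_comm, treeDist_cons_self]) u
      _ ≤ L * (L ^ w.length * G p x u) := by gcongr
      _ = L ^ (w.length + 1) * G p x u := by rw [pow_succ', mul_assoc]

lemma Harnack.greenE_le_append (hL : Harnack p L) (w x u : Word) :
    G p x u ≤ L ^ w.length * G p (w ++ x) u := by
  induction w with
  | nil => simp
  | cons a w ih =>
    calc G p x u ≤ L ^ w.length * G p (w ++ x) u := ih
      _ ≤ L ^ w.length * (L * G p (a :: (w ++ x)) u) := by
          gcongr
          exact hL _ _ (treeDist_cons_self a _) u
      _ = L ^ (w.length + 1) * G p (a :: (w ++ x)) u := by rw [pow_succ, mul_assoc]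

lemma Harnack.greenE_append_right_le (hL : Harnack p L) (hg : ∀ x, G p x x ≤ g) (s w x : Word) :
    G p s (w ++ x) ≤ L ^ w.length * g * G p s x :=
  greenE_le_mul_greenE (hg _) (hL.greenE_le_append w x x) s

lemma Harnack.greenE_ne_top (hL : Harnack p L) (hg : ∀ x, G p x x ≤ g) (s t : Word) :
    G p s t ≠ ⊤ := by
  have hs : G p s t ≤ L ^ s.length * G p [] t := by simpa using hL.greenE_append_le s [] t
  have ht : G p [] t ≤ L ^ t.length * G p t t := by simpa using hL.greenE_le_append t [] t
  have ht_fin : G p [] t ≠ ⊤ :=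
    ne_top_of_le_ne_top (by finiteness) (ht.trans (mul_le_mul_right (hg t) _))
  exact ne_top_of_le_ne_top (by finiteness) hs

-- A path between the two sides of `x` jumps to or from a word of `Delta x` of length at most
-- `|x| + S`, at which the Green kernel is comparable to its value at `x`.
lemma Harnack.exists_greenE_le_of_not_iff (hL : Harnack p L) (hg : ∀ x, G p x x ≤ g)
    (h1 : H1 p S) : ∃ c : ℝ≥0, ∀ x s u, ¬ (x <:+ s ↔ x <:+ u) →
      G p s u ≤ c * (G p s x * G p x u) := by
  classical
  set W : Finset Word := (List.finite_length_le Bool S).toFinset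
  refine ⟨∑ w ∈ W, L ^ w.length * g * L ^ w.length, fun x s u hsu => ?_⟩
  have hW {v w : Word} (hv : x <:+ v) (hw : ¬ x <:+ w) (hvw : treeDist v w ≤ S) :
      v ∈ W.image (· ++ x) := by
    have hlen := length_le_length_add_treeDist_of_suffix hv hw
    obtain ⟨v, rfl⟩ := hv
    refine Finset.mem_image_of_mem _ ((List.finite_length_le Bool S).mem_toFinset.2 ?_)
    rw [List.length_append] at hlen
    simp only [Set.mem_ofPred_eq]
    lia
  have hcross (v : Word) (hv : x <:+ v ↔ x <:+ s) (w : Word) (hw : ¬ (x <:+ w ↔ x <:+ s))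
      (hvw : p v w ≠ 0) : v ∈ W.image (· ++ x) ∨ w ∈ W.image (· ++ x) := by
    have hdist : treeDist v w ≤ S := not_lt.1 fun hlt => hvw (h1 v w hlt)
    by_cases hxv : x <:+ v
    · exact Or.inl (hW hxv (fun hxw => hw (by tauto)) hdist)
    · exact Or.inr (hW (by tauto) hxv (by rwa [treeDist_comm]))
  calc G p s u ≤ ∑ v ∈ W.image (· ++ x), G p s v * G p v u :=
        greenE_le_sum_of_crossing {v | x <:+ v ↔ x <:+ s} _ Iff.rfl (fun h => hsu h.symm) hcross
    _ = ∑ w ∈ W, G p s (w ++ x) * G p (w ++ x) u :=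
        Finset.sum_image fun _ _ _ _ h => List.append_cancel_right h
    _ ≤ ∑ w ∈ W, (L ^ w.length * g * G p s x) * (L ^ w.length * G p x u) := by
        gcongr with w
        · exact hL.greenE_append_right_le hg s w x
        · exact hL.greenE_append_le w x u
    _ = _ := by
        push_cast
        rw [Finset.sum_mul]
        exact Finset.sum_congr rfl fun w _ => by ring

lemma Harnack.exists_greenE_le_of_separates (hL : Harnack p L) (hg : ∀ x, G p x x ≤ g)
    (h1 : H1 p S) :
    ∃ c : ℝ≥0, ∀ x s u, Separates x s u → G p s u ≤ c * (G p s x * G p x u) := by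
  obtain ⟨c, hc⟩ := hL.exists_greenE_le_of_not_iff hg h1
  refine ⟨1 + c + c * (L * g * L), fun x s u hx => ?_⟩
  push_cast
  simp only [add_mul]
  rcases hx with rfl | rfl | hx | ⟨a, hx⟩
  · refine le_add_right (le_add_right ?_)
    rw [one_mul]
    exact le_mul_of_one_le_left' (one_le_greenE_self p s)
  · refine le_add_right (le_add_right ?_)
    rw [one_mul]
    exact le_mul_of_one_le_right' (one_le_greenE_self p u)
  · exact le_add_right (le_add_left (hc x s u hx))
  · refine le_add_left ?_
    calc G p s u ≤ c * (G p s (a :: x) * G p (a :: x) u) := hc (a :: x) s u hx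
      _ ≤ c * ((L * g * G p s x) * (L * G p x u)) := by
          gcongr
          · simpa using hL.greenE_append_right_le hg s [a] x
          · simpa using hL.greenE_append_le [a] x u
      _ = _ := by ring

-- Each `u` is charged to a point `x` between `u` and both of `s`, `t`, chosen among the suffixes of
-- `s` and of `t` which are at least as long as `y`; what remains is a sum over loops at `x`.
lemma exists_tsum_greenE_mul_pow_le {c c' r : ℝ≥0}
    (hancona : ∀ x s u, Separates x s u → G p s u ≤ c * (G p s x * G p x u))
    (hg : ∀ x, G p x x ≤ g) (hr : r < 1)
    (hloop : ∀ x : Word, ∑' u : Word, G p x u * ((r : ℝ≥0∞) ^ u.length * G p u x) ≤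
      c' * (r : ℝ≥0∞) ^ x.length) :
    ∃ M : ℝ≥0, ∀ y s t : Word, y <:+ s → y <:+ t →
      ∑' u : Word, G p s u * ((r : ℝ≥0∞) ^ u.length * G p u t) ≤
        M * (r : ℝ≥0∞) ^ y.length * G p s t := by
  refine ⟨c ^ 2 * g * c' * (2 * (1 - r)⁻¹), fun y s t hs ht => ?_⟩
  set A : Word → Set Word := fun s => {x | y.length ≤ x.length ∧ x <:+ s}
  have hcharge (u : Word) : G p s u * ((r : ℝ≥0∞) ^ u.length * G p u t) ≤
      ∑' x : ↑(A s ∪ A t), c ^ 2 * g * G p s t *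
        (G p x u * ((r : ℝ≥0∞) ^ u.length * G p u x)) := by
    obtain ⟨x, hyx, hxst, hsu, hut⟩ := exists_suffix_separates hs ht u
    have hx : x ∈ A s ∪ A t := hxst.imp (⟨hyx.length_le, ·⟩) (⟨hyx.length_le, ·⟩)
    exact (greenE_mul_mul_greenE_le (hancona x s u hsu) (hancona x u t hut) (hg x) _).trans
      (ENNReal.le_tsum (⟨x, hx⟩ : ↑(A s ∪ A t)))
  have hgeom : ∑' x : ↑(A s ∪ A t), (r : ℝ≥0∞) ^ x.1.length ≤
      2 * ((1 - r)⁻¹ : ℝ≥0) * (r : ℝ≥0∞) ^ y.length := by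
    rw [← tsum_coe_geometric hr, ENNReal.tsum_geometric, mul_assoc, two_mul, mul_comm _⁻¹]
    exact (ENNReal.tsum_union_le (fun x : Word => (r : ℝ≥0∞) ^ x.length) _ _).trans
      (add_le_add (tsum_pow_length_suffix_le _ _ s) (tsum_pow_length_suffix_le _ _ t))
  calc ∑' u : Word, G p s u * ((r : ℝ≥0∞) ^ u.length * G p u t)
      ≤ ∑' u : Word, ∑' x : ↑(A s ∪ A t), c ^ 2 * g * G p s t *
          (G p x u * ((r : ℝ≥0∞) ^ u.length * G p u x)) := ENNReal.tsum_le_tsum hcharge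
    _ = c ^ 2 * g * G p s t * ∑' x : ↑(A s ∪ A t), ∑' u : Word,
          G p x u * ((r : ℝ≥0∞) ^ u.length * G p u x) := by
        rw [ENNReal.tsum_comm]
        simp only [ENNReal.tsum_mul_left]
    _ ≤ c ^ 2 * g * G p s t * ∑' x : ↑(A s ∪ A t), c' * (r : ℝ≥0∞) ^ x.1.length := by
        gcongr with x
        exact hloop x
    _ ≤ c ^ 2 * g * G p s t * (c' * (2 * ((1 - r)⁻¹ : ℝ≥0) * (r : ℝ≥0∞) ^ y.length)) := by
        rw [ENNReal.tsum_mul_left]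
        gcongr
    _ = _ := by
        push_cast
        ring

end Ancona

/-! ### Convergence of the ratio -/

section Ratio

variable {p b : Word → Word → ℝ} {S K : ℕ} {δ₀ lam q C : ℝ} {m : Word → ℝ} {z : Word}

lemma exists_rate (S : ℕ) {a c : ℝ≥0} (ha : a < 1) (hc : c < 1) :
    ∃ r : ℝ≥0, r ≠ 0 ∧ r < 1 ∧ a ≤ r ∧ c < r ^ S := by
  have hpow : Filter.Tendsto (fun r : ℝ≥0 => r ^ S) (nhds 1) (nhds 1) := by
    simpa using (continuous_pow (M := ℝ≥0) S).tendsto 1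
  have hnear : ∀ᶠ r in nhdsWithin (1 : ℝ≥0) (Set.Iio 1), a < r ∧ c < r ^ S :=
    nhdsWithin_le_nhds ((lt_mem_nhds ha).and (hpow.eventually_const_lt hc))
  have hlt_one : ∀ᶠ r in nhdsWithin (1 : ℝ≥0) (Set.Iio 1), r < 1 := self_mem_nhdsWithin
  have : (nhdsWithin (1 : ℝ≥0) (Set.Iio 1)).NeBot := nhdsLT_neBot_of_exists_lt ⟨0, one_pos⟩
  obtain ⟨r, hr1, har, hcr⟩ := (hlt_one.and hnear).exists
  exact ⟨r, har.ne_bot, hr1, har.le, hcr⟩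

lemma Perturb.abs_extendByZero_le (hp : ∀ s t, 0 ≤ p s t) (hb : Perturb p b z q C)
    (u v : Word) : |extendByZero (Delta z) b u v| ≤ p u v := by
  rw [extendByZero]
  split_ifs with h
  · exact (hb u v h.1 h.2).1
  · simpa using hp u v

-- Inside `Delta z` the bound comes from `p u v ≥ δ₀`. A step leaving `Delta z`, which is erased by
-- the extension by zero, starts at a word of length at most `|z| + S`.
lemma Perturb.exists_abs_extendByZero_sub_le (hp : ∀ s t, 0 ≤ p s t) (hδ₀ : 0 < δ₀)
    (h1 : H1 p S) (h2 : H2 p δ₀) (hb : Perturb p b z q C) (hq : 0 ≤ q) {r : ℝ≥0} (hr0 : r ≠ 0)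
    (hr1 : r ≤ 1) (hqr : q ≤ r) :
    ∃ D : ℝ≥0, ∀ u ∈ Delta z, ∀ v,
      |extendByZero (Delta z) b u v - p u v| ≤ D * r ^ u.length * p u v := by
  lift δ₀ to ℝ≥0 using hδ₀.le
  refine ⟨C.toNNReal / δ₀ + (r ^ (z.length + S))⁻¹, fun u hu v => ?_⟩
  rcases (hp u v).eq_or_lt with h0 | hpos
  · have hzero : extendByZero (Delta z) b u v = 0 :=
      abs_nonpos_iff.1 ((hb.abs_extendByZero_le hp u v).trans_eq h0.symm)
    simp [hzero, ← h0]
  push_cast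
  by_cases hv : v ∈ Delta z
  · have hδ := h2 u v hpos
    rw [extendByZero_of_mem hu hv]
    calc |b u v - p u v| ≤ C * q ^ u.length := (hb u v hu hv).2
      _ ≤ C.toNNReal * (r : ℝ) ^ u.length := by
          gcongr
          exact C.le_coe_toNNReal
      _ = C.toNNReal / δ₀ * (r : ℝ) ^ u.length * δ₀ := by field_simp
      _ ≤ (C.toNNReal / δ₀ + ((r : ℝ) ^ (z.length + S))⁻¹) * (r : ℝ) ^ u.length * p u v := by
          gcongr
          exact le_add_of_nonneg_right (by positivity)
  · have hdist : treeDist u v ≤ S := not_lt.1 fun hlt => hpos.ne' (h1 u v hlt)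
    have hlen : u.length ≤ z.length + S :=
      (length_le_length_add_treeDist_of_suffix hu hv).trans (by lia)
    rw [extendByZero_of_notMem u hv, zero_sub, abs_neg, abs_of_pos hpos]
    refine le_mul_of_one_le_left hpos.le ?_
    calc (1 : ℝ) = ((r : ℝ) ^ (z.length + S))⁻¹ * (r : ℝ) ^ (z.length + S) :=
          (inv_mul_cancel₀ (by positivity)).symm
      _ ≤ (C.toNNReal / δ₀ + ((r : ℝ) ^ (z.length + S))⁻¹) * (r : ℝ) ^ u.length := by
          gcongr ?_ * ?_
          · exact le_add_of_nonneg_left (by positivity)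
          · exact pow_le_pow_of_le_one r.coe_nonneg hr1 hlen

lemma Perturb.exists_enorm_extendByZero_sub_le (hp : ∀ s t, 0 ≤ p s t) (hδ₀ : 0 < δ₀)
    (h1 : H1 p S) (h2 : H2 p δ₀) (hb : Perturb p b z q C) (hq : 0 ≤ q) {r : ℝ≥0} (hr0 : r ≠ 0)
    (hr1 : r ≤ 1) (hqr : q ≤ r) :
    ∃ D : ℝ≥0, ∀ u ∈ Delta z, ∀ v, ‖extendByZero (Delta z) b u v - p u v‖ₑ ≤
      D * (r : ℝ≥0∞) ^ u.length * ENNReal.ofReal (p u v) := by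
  obtain ⟨D, hD⟩ := hb.exists_abs_extendByZero_sub_le hp hδ₀ h1 h2 hq hr0 hr1 hqr
  refine ⟨D, fun u hu v => ?_⟩
  calc ‖extendByZero (Delta z) b u v - p u v‖ₑ
      ≤ ENNReal.ofReal (D * r ^ u.length * p u v) := by
        rw [Real.enorm_eq_ofReal_abs]
        exact ENNReal.ofReal_le_ofReal (hD u hu v)
    _ = _ := by
        rw [ENNReal.ofReal_mul (by positivity), ENNReal.ofReal_mul (by positivity),
          ENNReal.ofReal_pow (by positivity), ENNReal.ofReal_coe_nnreal, ENNReal.ofReal_coe_nnreal]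

lemma Perturb.exists_abs_greenR_sub_le (hp : ∀ s t, 0 ≤ p s t) (hδ₀ : 0 < δ₀) (hlam0 : 0 ≤ lam)
    (hlam1 : lam < 1) (h1 : H1 p S) (h2 : H2 p δ₀) (h3 : H3 p δ₀ K) (h4 : H4 p m lam)
    (hq0 : 0 ≤ q) (hq1 : q < 1) (hb : Perturb p b z q C) :
    ∃ M r : ℝ≥0, r < 1 ∧ ∀ y ∈ Delta z, ∀ s ∈ Delta y, ∀ t ∈ Delta y,
      |greenR (Delta z) b s t - (G p s t).toReal| ≤ M * r ^ y.length * (G p s t).toReal := by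
  lift q to ℝ≥0 using hq0
  lift lam to ℝ≥0 using hlam0
  have hℓ := length_le_add_of_H1 h1
  have hself (n : ℕ) (x : Word) : nStepE Set.univ p n x x ≤ (lam : ℝ≥0∞) ^ n := by
    simpa using nStepE_self_le hp (finite_setOf_ne_zero_of_H1 h1) h4.1 lam.coe_nonneg h4.2 n x
  obtain ⟨r, hr0, hr1, hqr, hlamr⟩ := exists_rate S (a := q) (c := lam) hq1 hlam1
  obtain ⟨g, hg⟩ := exists_greenE_self_le (by exact_mod_cast hlam1) hself
  obtain ⟨L, hL⟩ := exists_harnack hδ₀ h3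
  obtain ⟨c, hancona⟩ := hL.exists_greenE_le_of_separates hg h1
  obtain ⟨c', hloop⟩ := exists_tsum_loop_le hℓ hself hlam1 hr0 hr1.le hlamr
  obtain ⟨M, hM⟩ := exists_tsum_greenE_mul_pow_le hancona hg hr1 hloop
  obtain ⟨D, hD⟩ := hb.exists_enorm_extendByZero_sub_le hp hδ₀ h1 h2 q.coe_nonneg hr0 hr1.le hqr
  refine ⟨D * M, r, hr1, fun y hy s hs t ht => ?_⟩
  have hfin : G p s t ≠ ⊤ := hL.greenE_ne_top hg s t
  have henorm : ‖greenR (Delta z) b s t - (G p s t).toReal‖ₑ ≤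
      (D * M * r ^ y.length : ℝ≥0) * G p s t := by
    rw [greenR_eq_greenR_extendByZero b (hy.trans hs)]
    calc _ ≤ ∑' u, G p s u * (D * r ^ u.length * G p u t) :=
          enorm_greenR_sub_le (hb.abs_extendByZero_le hp)
            (fun u v => extendByZero_of_notMem u) hD (hy.trans hs) hfin
      _ = D * ∑' u, G p s u * (r ^ u.length * G p u t) := by
          simp only [← ENNReal.tsum_mul_left, mul_left_comm, mul_assoc]
      _ ≤ D * (M * r ^ y.length * G p s t) := mul_le_mul_right (hM y s t hs ht) _
      _ = _ := by push_cast; ring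
  have := ENNReal.toReal_mono (by finiteness) henorm
  simpa using this

lemma endWord_suffix_endWord (ω : ℕ → Bool) {j k : ℕ} (hjk : j ≤ k) :
    endWord ω j <:+ endWord ω k := by
  obtain ⟨i, rfl⟩ := Nat.exists_eq_add_of_le hjk
  rw [endWord, endWord, List.range_add, List.reverse_append, List.map_append]
  exact List.suffix_append _ _

theorem martin_kernel_ratio_general (hp : ∀ s t, 0 ≤ p s t) (hδ₀ : 0 < δ₀) (hlam0 : 0 ≤ lam)
    (hlam1 : lam < 1) (h1 : H1 p S) (h2 : H2 p δ₀) (h3 : H3 p δ₀ K) (h4 : H4 p m lam)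
    (hq0 : 0 ≤ q) (hq1 : q < 1) (hb : Perturb p b z q C) {ε : ℝ} (hε : 0 < ε) :
    ∃ k, z.length ≤ k ∧ ∀ ω : ℕ → Bool, endWord ω z.length = z →
      ∀ s ∈ Delta (endWord ω k), ∀ t ∈ Delta (endWord ω k),
        |greenR (Delta z) b s t - (G p s t).toReal| ≤ ε * (G p s t).toReal := by
  obtain ⟨M, r, hr, hM⟩ := hb.exists_abs_greenR_sub_le hp hδ₀ hlam0 hlam1 h1 h2 h3 h4 hq0 hq1
  have hlim : Filter.Tendsto (fun n => (M : ℝ) * (r : ℝ) ^ n) Filter.atTop (nhds 0) := by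
    simpa using (tendsto_pow_atTop_nhds_zero_of_lt_one r.coe_nonneg hr).const_mul (M : ℝ)
  obtain ⟨k, hk, hzk⟩ :=
    ((hlim.eventually_le_const hε).and (Filter.eventually_ge_atTop z.length)).exists
  refine ⟨k, hzk, fun ω hω s hs t ht => (hM (endWord ω k) ?_ s hs t ht).trans ?_⟩
  · exact hω ▸ endWord_suffix_endWord ω hzk
  · gcongr
    simpa [endWord] using hk

end Ratio

/-- The concluding Remark of the paper: the ratio of the Martin kernels of `b` and `p`
tends to `1` at every end `ω` in the closure of `Δ_z`: for every `ε > 0`, for all `s`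
sufficiently close to `ω` one has `|G_b(s,t) − G_p(s,t)| ≤ ε G_p(s,t)` for all `t`
sufficiently close to `ω`. -/
theorem martin_kernel_ratio (p : Word → Word → ℝ) (hp : ∀ s t, 0 ≤ p s t)
    (hsub : Substochastic p)
    (S : ℕ) (δ₀ : ℝ) (hδ₀ : δ₀ ∈ Set.Ioo (0 : ℝ) 1) (K : ℕ)
    (m : Word → ℝ) (lam : ℝ) (hlam : lam ∈ Set.Ioo (0 : ℝ) 1)
    (h1 : H1 p S) (h2 : H2 p δ₀) (h3 : H3 p δ₀ K) (h4 : H4 p m lam)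
    (z : Word) (q C : ℝ) (hq : q ∈ Set.Ioo (0 : ℝ) 1) (hC : 0 < C)
    (b : Word → Word → ℝ) (hb : Perturb p b z q C) :
    ∀ ω : ℕ → Bool, endWord ω z.length = z → ∀ ε > (0 : ℝ),
      ∃ k, z.length ≤ k ∧ ∀ s ∈ Delta (endWord ω k),
        ∃ l, z.length ≤ l ∧ ∀ t ∈ Delta (endWord ω l),
          |greenR (Delta z) b s t - (greenE Set.univ p s t).toReal| ≤
            ε * (greenE Set.univ p s t).toReal := by
  intro ω hω ε hε
  obtain ⟨k, hk, h⟩ := martin_kernel_ratio_general hp hδ₀.1 hlam.1.le hlam.2 h1 h2 h3 h4 hq.1.le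
    hq.2 hb hε
  exact ⟨k, hk, fun s hs => ⟨k, hk, h ω hω s hs⟩⟩

end Paper
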